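/- Plain-complexity characterization of 2-randomness (Nies–Stephan–Terwijn; Miller): A ∈ 2^ω is 2-random (i.e. Martin-Löf random relative to ∅') if and only if A is infinitely often C-incompressible, i.e. there is some c ∈ ℕ such that C(A↾n) ≥ n − c for infinitely many n. -/

import Mathlib

open scoped ENNReal NNReal Classical

namespace AR

/-- Elements of Cantor space `2^ω`: infinite binary sequences. -/
abbrev Seq := ℕ → Bool

/-- Finite binary strings `2^{<ω}`. -/
abbrev Str := List Bool

/-- The first `n` bits of a sequence `A`, as a finite string (`A↾n`). -/
def pre (A : Seq) (n : ℕ) : Str := List.ofFn fun i : Fin n => A i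

/-- The basic clopen cylinder `[σ]` of all sequences extending `σ`. -/
def cyl (σ : Str) : Set Seq := {A | pre A σ.length = σ}

/-- A measure on Cantor space is *fair-coin* if every cylinder `[σ]` has measure
`2^{-|σ|}`; this uniquely characterizes the usual product measure `μ` on `2^ω`. -/
def FairCoin (μ : MeasureTheory.Measure Seq) : Prop :=
  ∀ σ : Str, μ (cyl σ) = (2 : ℝ≥0∞)⁻¹ ^ σ.length

/-- A machine is a partial computable function `2^{<ω} ⇀ 2^{<ω}`. -/
def IsMachine (M : Str →. Str) : Prop := Partrec M

/-- Kolmogorov complexity of `τ` relative to the machine `M`: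
`C_M(τ) = min{|σ| : M(σ)↓ = τ}`, with value `∞` if no such `σ` exists. -/
noncomputable def Cplx (M : Str →. Str) (τ : Str) : ℕ∞ :=
  sInf ((fun σ : Str => (σ.length : ℕ∞)) '' {σ | τ ∈ M σ})

/-- A universal machine: a machine simulating every machine up to an additive
constant.  `Cplx U` for universal `U` is plain Kolmogorov complexity `C`. -/
def UniversalMachine (U : Str →. Str) : Prop :=
  IsMachine U ∧ ∀ M : Str →. Str, IsMachine M → ∃ c : ℕ, ∀ τ, Cplx U τ ≤ Cplx M τ + c

/-- A set of strings is prefix-free if none of its elements is a proper initial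
segment of another. -/
def PrefixFree (S : Set Str) : Prop :=
  ∀ σ ∈ S, ∀ τ ∈ S, σ <+: τ → σ = τ

/-- A prefix-free machine: a machine whose domain is prefix-free. -/
def PrefixFreeMachine (M : Str →. Str) : Prop :=
  IsMachine M ∧ PrefixFree {σ | (M σ).Dom}

/-- A universal prefix-free machine.  `Cplx U` for such `U` is prefix-free
Kolmogorov complexity `K`. -/
def UniversalPFMachine (U : Str →. Str) : Prop :=
  PrefixFreeMachine U ∧
    ∀ M : Str →. Str, PrefixFreeMachine M → ∃ c : ℕ, ∀ τ, Cplx U τ ≤ Cplx M τ + c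

/-- A c.e. (recursively enumerable) predicate. -/
def CEPred {α} [Primcodable α] (p : α → Prop) : Prop :=
  Partrec fun a => Part.assert (p a) fun _ => Part.some ()

/-- A Martin-Löf test: a sequence of uniformly Σ⁰₁ classes `U i`, given by a single
c.e. set `W` of pairs, with `μ (U i) ≤ 2^{-i}`. -/
def MLTest (μ : MeasureTheory.Measure Seq) (U : ℕ → Set Seq) : Prop :=
  ∃ W : Set (ℕ × Str), CEPred (· ∈ W) ∧
    (∀ i, U i = ⋃ σ ∈ {σ : Str | (i, σ) ∈ W}, cyl σ) ∧
    ∀ i, μ (U i) ≤ (2 : ℝ≥0∞)⁻¹ ^ i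

/-- `A` is Martin-Löf random if it passes every Martin-Löf test. -/
def MLRandom (μ : MeasureTheory.Measure Seq) (A : Seq) : Prop :=
  ∀ U : ℕ → Set Seq, MLTest μ U → A ∉ ⋂ i, U i

/-- Oracle partial recursion: `RecIn O f` means that the partial function
`f : ℕ ⇀ ℕ` is partial recursive relative to the oracle `O`
(Mathlib's `Nat.RecursiveIn`). -/
inductive RecIn (O : ℕ →. ℕ) : (ℕ →. ℕ) → Prop
  | zero : RecIn O (pure 0)
  | succ : RecIn O Nat.succ
  | left : RecIn O ↑fun n : ℕ => n.unpair.1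
  | right : RecIn O ↑fun n : ℕ => n.unpair.2
  | oracle : RecIn O O
  | pair {f g} : RecIn O f → RecIn O g → RecIn O fun n => Nat.pair <$> f n <*> g n
  | comp {f g} : RecIn O f → RecIn O g → RecIn O fun n => g n >>= f
  | prec {f g} : RecIn O f → RecIn O g → RecIn O (Nat.unpaired fun a n =>
      n.rec (f a) fun y IH => do let i ← IH; g (Nat.pair a (Nat.pair y i)))
  | rfind {f} : RecIn O f →
      RecIn O fun a => Nat.rfind fun n => (fun m => m = 0) <$> f (Nat.pair a n)

/-- The characteristic-function oracle associated to a sequence `A ∈ 2^ω`. -/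
def oracleOf (A : Seq) : ℕ →. ℕ := fun n => Part.some (cond (A n) 1 0)

/-- The characteristic-function oracle associated to a set of naturals. -/
noncomputable def oracleOfSet (S : Set ℕ) : ℕ →. ℕ :=
  fun n => Part.some (if n ∈ S then 1 else 0)

/-- Relative partial computability for partial functions between coded types. -/
def PartrecIn (O : ℕ →. ℕ) {α σ} [Primcodable α] [Primcodable σ] (f : α →. σ) : Prop :=
  RecIn O fun n =>
    Part.bind (Encodable.decode (α := α) n) fun a => (f a).map Encodable.encode

/-- A predicate is c.e. relative to the oracle `O`. -/
def CEPredIn (O : ℕ →. ℕ) {α} [Primcodable α] (p : α → Prop) : Prop :=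
  PartrecIn O fun a => Part.assert (p a) fun _ => Part.some ()

/-- Turing reducibility between oracles: `f` is recursive in `g`. -/
def TuringLE (f g : ℕ →. ℕ) : Prop := RecIn g f

/-- Turing reducibility `B ≤_T A` between sequences. -/
def SeqTuringLE (B A : Seq) : Prop := TuringLE (oracleOf B) (oracleOf A)

/-- The `e`-th partial computable function `φ_e`, via Mathlib's standard
enumeration of codes for the partial recursive functions. -/
def phi (e : ℕ) : ℕ →. ℕ := (Denumerable.ofNat Nat.Partrec.Code e).eval

/-- The halting problem `∅' = {e : φ_e(e)↓}`. -/
def haltingSet : Set ℕ := {e | (phi e e).Dom}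

/-- A Martin-Löf test relative to the oracle `O`. -/
def MLTestIn (O : ℕ →. ℕ) (μ : MeasureTheory.Measure Seq) (U : ℕ → Set Seq) : Prop :=
  ∃ W : Set (ℕ × Str), CEPredIn O (· ∈ W) ∧
    (∀ i, U i = ⋃ σ ∈ {σ : Str | (i, σ) ∈ W}, cyl σ) ∧
    ∀ i, μ (U i) ≤ (2 : ℝ≥0∞)⁻¹ ^ i

/-- Martin-Löf randomness relative to the oracle `O`. -/
def MLRandomIn (O : ℕ →. ℕ) (μ : MeasureTheory.Measure Seq) (A : Seq) : Prop :=
  ∀ U : ℕ → Set Seq, MLTestIn O μ U → A ∉ ⋂ i, U i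

/-! ### Classes of predicates -/

/-- A class of predicates on coded types that contains the primitive recursive predicates and is
closed under conjunction, disjunction, primitive recursive substitution and bounded universal
quantification. -/
structure PredClass (K : ∀ (α : Type) [Primcodable α], (α → Prop) → Prop) : Prop where
  of_primrec : ∀ {α : Type} [Primcodable α] {p : α → Prop}, PrimrecPred p → K α p
  and : ∀ {α : Type} [Primcodable α] {p q : α → Prop}, K α p → K α q → K α fun a => p a ∧ q a
  or : ∀ {α : Type} [Primcodable α] {p q : α → Prop}, K α p → K α q → K α fun a => p a ∨ q a
  comp : ∀ {α β : Type} [Primcodable α] [Primcodable β] {p : β → Prop} {f : α → β},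
    K β p → Primrec f → K α fun a => p (f a)
  ball : ∀ {α : Type} [Primcodable α] {p : α × ℕ → Prop},
    K (α × ℕ) p → K (α × ℕ) fun a => ∀ j < a.2, p (a.1, j)

/-- The predicates obtained from members of `K` by one unbounded existential quantifier. -/
def Proj (K : ∀ (α : Type) [Primcodable α], (α → Prop) → Prop) (α : Type) [Primcodable α]
    (p : α → Prop) : Prop :=
  ∃ q : α × ℕ → Prop, K (α × ℕ) q ∧ ∀ a, p a ↔ ∃ x, q (a, x)

/-- The complements of the members of `K`. -/
def Compl (K : ∀ (α : Type) [Primcodable α], (α → Prop) → Prop) (α : Type) [Primcodable α]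
    (p : α → Prop) : Prop :=
  K α fun a => ¬ p a

/-- Primitive recursive predicates. -/
def Prim (α : Type) [Primcodable α] (p : α → Prop) : Prop := PrimrecPred p

/-- Predicates of the form `∃ x, R a x` with `R` primitive recursive. -/
def Sig1 : ∀ (α : Type) [Primcodable α], (α → Prop) → Prop := Proj Prim

/-- Predicates of the form `∀ x, R a x` with `R` primitive recursive. -/
def Pi1 : ∀ (α : Type) [Primcodable α], (α → Prop) → Prop := Compl Sig1

/-- Predicates of the form `∃ x, ∀ y, R a x y` with `R` primitive recursive. -/
def Sig2 : ∀ (α : Type) [Primcodable α], (α → Prop) → Prop := Proj Pi1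

theorem _root_.PrimrecPred.subst {α β : Type} [Primcodable α] [Primcodable β] {p : β → Prop}
    {f : α → β} (hp : PrimrecPred p) (hf : Primrec f) : PrimrecPred fun a => p (f a) := by
  obtain ⟨_, h⟩ := hp
  exact ⟨fun a => inferInstance, h.comp hf⟩

theorem predClass_prim : PredClass Prim where
  of_primrec h := h
  and h h' := PrimrecPred.and h h'
  or h h' := PrimrecPred.or h h'
  comp h hf := PrimrecPred.subst h hf
  ball {α _ p} h := by
    have h1 : PrimrecRel fun (j : ℕ) (a : α) => p (a, j) :=
      PrimrecPred.subst h (Primrec.pair Primrec.snd Primrec.fst)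
    have h2 := PrimrecPred.subst (PrimrecRel.forall_mem_list h1)
      (Primrec.pair (Primrec.list_range.comp Primrec.snd) (Primrec.fst (α := α) (β := ℕ)))
    simpa [Prim] using h2

section

variable {K : ∀ (α : Type) [Primcodable α], (α → Prop) → Prop}

theorem PredClass.proj (hK : PredClass K) : PredClass (Proj K) where
  of_primrec {α _ p} h :=
    ⟨fun z => p z.1, hK.of_primrec (PrimrecPred.subst h Primrec.fst), fun a => by simp⟩
  and {α _ p q} hp hq := by
    obtain ⟨p', hp', hp⟩ := hp
    obtain ⟨q', hq', hq⟩ := hq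
    refine ⟨fun z => p' (z.1, z.2.unpair.1) ∧ q' (z.1, z.2.unpair.2),
      hK.and (hK.comp hp' ?_) (hK.comp hq' ?_), fun a => ?_⟩
    · exact Primrec.pair Primrec.fst (Primrec.fst.comp (Primrec.unpair.comp Primrec.snd))
    · exact Primrec.pair Primrec.fst (Primrec.snd.comp (Primrec.unpair.comp Primrec.snd))
    · simp only [hp, hq]
      constructor
      · rintro ⟨⟨x, hx⟩, ⟨y, hy⟩⟩
        exact ⟨Nat.pair x y, by simpa using ⟨hx, hy⟩⟩
      · rintro ⟨x, hx, hy⟩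
        exact ⟨⟨_, hx⟩, ⟨_, hy⟩⟩
  or {α _ p q} hp hq := by
    obtain ⟨p', hp', hp⟩ := hp
    obtain ⟨q', hq', hq⟩ := hq
    exact ⟨fun z => p' z ∨ q' z, hK.or hp' hq', fun a => by simp only [hp, hq, exists_or]⟩
  comp {α β _ _ p f} hp hf := by
    obtain ⟨p', hp', hp⟩ := hp
    exact ⟨fun z => p' (f z.1, z.2),
      hK.comp hp' (Primrec.pair (hf.comp Primrec.fst) Primrec.snd), fun a => hp _⟩
  ball {α _ p} hp := by
    obtain ⟨p', hp', hp⟩ := hp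
    let w : ℕ → ℕ → ℕ := fun x j => ((Encodable.decode (α := List ℕ) x).getD []).getD j 0
    have hw : Primrec fun z : ((α × ℕ) × ℕ) × ℕ => w z.1.2 z.2 :=
      (Primrec.list_getD 0).comp (Primrec.option_getD.comp
        (Primrec.decode.comp (Primrec.snd.comp Primrec.fst)) (Primrec.const [])) Primrec.snd
    have h1 : K (((α × ℕ) × ℕ) × ℕ) fun z => p' ((z.1.1.1, z.2), w z.1.2 z.2) :=
      hK.comp hp' (Primrec.pair (Primrec.pair (Primrec.fst.comp (Primrec.fst.comp Primrec.fst))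
        Primrec.snd) hw)
    refine ⟨fun z => ∀ j < z.1.2, p' ((z.1.1, j), w z.2 j),
      hK.comp (hK.ball h1) (Primrec.pair Primrec.id (Primrec.snd.comp Primrec.fst)), ?_⟩
    rintro ⟨a, n⟩
    simp only [hp]
    constructor
    · intro h
      choose! g hg using h
      refine ⟨Encodable.encode ((List.range n).map g), fun j hj => ?_⟩
      have : w (Encodable.encode ((List.range n).map g)) j = g j := by
        simp [w, List.getD_eq_getElem?_getD, hj]
      rw [this]
      exact hg j hj
    · rintro ⟨x, hx⟩ j hj
      exact ⟨_, hx j hj⟩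

theorem PredClass.proj_exists (hK : PredClass K) {α β : Type} [Primcodable α] [Primcodable β]
    [Inhabited β] {p : α × β → Prop} (hp : Proj K (α × β) p) :
    Proj K α fun a => ∃ b, p (a, b) := by
  obtain ⟨p', hp', hp⟩ := hp
  let d : ℕ → β := fun x => (Encodable.decode (α := β) x.unpair.1).getD default
  have hd : Primrec fun z : α × ℕ => d z.2 :=
    Primrec.option_getD.comp (Primrec.decode.comp (Primrec.fst.comp
      (Primrec.unpair.comp Primrec.snd))) (Primrec.const default)
  refine ⟨fun z => p' ((z.1, d z.2), z.2.unpair.2), hK.comp hp' (Primrec.pair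
    (Primrec.pair Primrec.fst hd) (Primrec.snd.comp (Primrec.unpair.comp Primrec.snd))),
    fun a => ?_⟩
  simp only [hp]
  constructor
  · rintro ⟨b, x, hx⟩
    exact ⟨Nat.pair (Encodable.encode b) x, by simpa [d] using hx⟩
  · rintro ⟨x, hx⟩
    exact ⟨_, _, hx⟩

theorem predClass_sig1 : PredClass Sig1 := predClass_prim.proj

theorem predClass_pi1 : PredClass Pi1 where
  of_primrec h := predClass_sig1.of_primrec h.not
  and {α _ p q} hp hq := by
    have := predClass_sig1.or hp hq
    unfold Pi1 Compl
    simpa only [not_and_or] using this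
  or {α _ p q} hp hq := by
    have := predClass_sig1.and hp hq
    unfold Pi1 Compl
    simpa only [not_or] using this
  comp {α β _ _ p f} h hf := predClass_sig1.comp (p := fun b => ¬ p b) h hf
  ball {α _ p} hp := by
    have h1 : Sig1 ((α × ℕ) × ℕ) fun z => z.2 < z.1.2 ∧ ¬ p (z.1.1, z.2) :=
      predClass_sig1.and (predClass_sig1.of_primrec
        (PrimrecRel.comp Primrec.nat_lt Primrec.snd (Primrec.snd.comp Primrec.fst)))
        (predClass_sig1.comp (p := fun b => ¬ p b) hp
          (Primrec.pair (Primrec.fst.comp Primrec.fst) Primrec.snd))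
    have : Sig1 (α × ℕ) _ := predClass_prim.proj_exists h1
    unfold Pi1 Compl
    simpa only [not_forall, exists_prop] using this

theorem predClass_sig2 : PredClass Sig2 := predClass_pi1.proj

theorem Sig1.exists {α β : Type} [Primcodable α] [Primcodable β] [Inhabited β]
    {p : α × β → Prop} (hp : Sig1 (α × β) p) : Sig1 α fun a => ∃ b, p (a, b) :=
  predClass_prim.proj_exists hp

theorem Sig2.exists {α β : Type} [Primcodable α] [Primcodable β] [Inhabited β]
    {p : α × β → Prop} (hp : Sig2 (α × β) p) : Sig2 α fun a => ∃ b, p (a, b) :=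
  predClass_pi1.proj_exists hp

theorem Pi1.sig2 {α : Type} [Primcodable α] {p : α → Prop} (hp : Pi1 α p) : Sig2 α p :=
  ⟨fun z => p z.1, predClass_pi1.comp hp Primrec.fst, fun a => by simp⟩

theorem Sig1.pi1_not {α : Type} [Primcodable α] {p : α → Prop} (hp : Sig1 α p) :
    Pi1 α fun a => ¬ p a := by
  unfold Pi1 Compl
  simpa only [not_not] using hp

theorem Sig1.sig2 {α : Type} [Primcodable α] {p : α → Prop} (hp : Sig1 α p) : Sig2 α p := by
  obtain ⟨q, hq, h⟩ := hp
  exact ⟨q, predClass_pi1.of_primrec hq, h⟩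

theorem PredClass.ball_lt (hK : PredClass K) {α : Type} [Primcodable α] {p : α × ℕ → Prop}
    (hp : K (α × ℕ) p) {f : α → ℕ} (hf : Primrec f) : K α fun a => ∀ j < f a, p (a, j) :=
  hK.comp (hK.ball hp) (Primrec.pair Primrec.id hf)

theorem PredClass.ball_list (hK : PredClass K) {α β : Type} [Primcodable α] [Primcodable β]
    [Inhabited β] {p : α × β → Prop} (hp : K (α × β) p) {f : α → List β} (hf : Primrec f) :
    K α fun a => ∀ b ∈ f a, p (a, b) := by
  have h1 : K (α × ℕ) fun z => p (z.1, (f z.1).getD z.2 default) :=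
    hK.comp hp (Primrec.pair Primrec.fst
      ((Primrec.list_getD default).comp (hf.comp Primrec.fst) Primrec.snd))
  have := hK.ball_lt h1 (Primrec.list_length.comp hf)
  convert this using 2 with a
  constructor
  · intro h j hj
    simp only [List.getD_eq_getElem _ _ hj]
    exact h _ (List.getElem_mem _)
  · intro h b hb
    obtain ⟨j, hj, rfl⟩ := List.getElem_of_mem hb
    simpa only [List.getD_eq_getElem _ _ hj] using h j hj

end

/-! ### Arithmetical classes and relative computability -/

theorem sig1_graph_of_partrec {α β : Type} [Primcodable α] [Primcodable β] {f : α →. β}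
    (hf : Partrec f) : Sig1 (α × β) fun z => z.2 ∈ f z.1 := by
  obtain ⟨c, hc⟩ := Nat.Partrec.Code.exists_code.1 hf
  refine ⟨fun z => Nat.Partrec.Code.evaln z.2 c (Encodable.encode z.1.1) =
    some (Encodable.encode z.1.2), ?_, ?_⟩
  · exact PrimrecRel.comp Primrec.eq
      (Nat.Partrec.Code.primrec_evaln.comp (Primrec.pair (Primrec.pair Primrec.snd
        (Primrec.const c)) (Primrec.encode.comp (Primrec.fst.comp Primrec.fst))))
      (Primrec.option_some.comp (Primrec.encode.comp (Primrec.snd.comp Primrec.fst)))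
  · rintro ⟨a, b⟩
    have h1 : Encodable.encode b ∈ c.eval (Encodable.encode a) ↔ b ∈ f a := by
      rw [hc]
      simp
    exact h1.symm.trans Nat.Partrec.Code.evaln_complete

theorem Sig1.exists_reduction_haltingSet {p : ℕ → Prop} (hp : Sig1 ℕ p) :
    ∃ s : ℕ → ℕ, Primrec s ∧ ∀ n, s n ∈ haltingSet ↔ p n := by
  obtain ⟨q, ⟨_, hq⟩, h⟩ := hp
  have h1 : Partrec fun n : ℕ => Nat.rfind fun x => Part.some (decide (q (n.unpair.1, x))) := by
    refine Partrec.rfind (Computable.partrec (Primrec.to_comp ?_))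
    exact hq.comp (Primrec.pair (Primrec.fst.comp (Primrec.unpair.comp Primrec.fst)) Primrec.snd)
  obtain ⟨c, hc⟩ := Nat.Partrec.Code.exists_code.1 (Partrec.nat_iff.1 h1)
  refine ⟨fun n => Encodable.encode (c.curry n), Primrec.encode.comp
    (Nat.Partrec.Code.primrec₂_curry.comp (Primrec.const c) Primrec.id), fun n => ?_⟩
  rw [haltingSet, Set.mem_ofPred_eq, phi, Denumerable.ofNat_encode, Nat.Partrec.Code.eval_curry,
    hc, h]
  refine Nat.rfind_dom.trans ?_
  simp

theorem RecIn.of_partrec {O f : ℕ →. ℕ} (hf : Nat.Partrec f) : RecIn O f := by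
  induction hf with
  | zero => exact .zero
  | succ => exact .succ
  | left => exact .left
  | right => exact .right
  | pair _ _ h1 h2 => exact .pair h1 h2
  | comp _ _ h1 h2 => exact .comp h1 h2
  | prec _ _ h1 h2 => exact .prec h1 h2
  | rfind _ h => exact .rfind h

theorem Sig2.cePredIn {α : Type} [Primcodable α] [Inhabited α] {p : α → Prop}
    (hp : Sig2 α p) : CEPredIn (oracleOfSet haltingSet) p := by
  have hp' : Sig2 ℕ fun n => (Encodable.decode (α := α) n).isSome = true ∧
      p ((Encodable.decode (α := α) n).getD default) :=
    predClass_sig2.and (predClass_sig2.of_primrec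
      (PrimrecRel.comp Primrec.eq (Primrec.option_isSome.comp Primrec.decode)
        (Primrec.const true)))
      (predClass_sig2.comp hp (Primrec.option_getD.comp Primrec.decode (Primrec.const default)))
  obtain ⟨q, hq, h⟩ := hp'
  have hq1 : Sig1 ℕ fun n => ¬ q n.unpair :=
    predClass_sig1.comp (p := fun z => ¬ q z) hq Primrec.unpair
  obtain ⟨s, hs, hsq⟩ := hq1.exists_reduction_haltingSet
  have h1 : RecIn (oracleOfSet haltingSet) fun n => Part.some (if q n.unpair then 0 else 1) := by
    refine (congrArg (RecIn _) (funext fun n => ?_)).mpr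
      (.comp .oracle (.of_partrec (Partrec.nat_iff.1 hs.to_comp.partrec)))
    refine Eq.trans ?_ (Part.bind_some _ _).symm
    simp only [oracleOfSet, hsq]
    by_cases hn : q n.unpair <;> simp [hn]
  have h2 := RecIn.comp (.of_partrec (Partrec.nat_iff.1 (Primrec.const 0).to_comp.partrec))
    (RecIn.rfind h1)
  unfold CEPredIn PartrecIn
  refine (congrArg (RecIn _) (funext fun n => Part.ext fun m => ?_)).mpr h2
  have key : (∃ a, Encodable.decode (α := α) n = some a ∧ p a) ↔ ∃ x, q (n, x) := by
    refine Iff.trans ?_ (h n)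
    dsimp only
    cases Encodable.decode (α := α) n <;> simp
  have hr : ∀ x, q (n, x) ↔ (true ∈ (fun m => decide (m = 0)) <$>
      Part.some (if q (Nat.pair n x).unpair then 0 else 1)) := by
    intro x
    by_cases hx : q (n, x) <;> simp [hx]
  have hr' : ∀ x, ¬ q (n, x) ↔ (false ∈ (fun m => decide (m = 0)) <$>
      Part.some (if q (Nat.pair n x).unpair then 0 else 1)) := by
    intro x
    by_cases hx : q (n, x) <;> simp [hx]
  refine Iff.trans Part.mem_bind_iff (Iff.trans ?_ Part.mem_bind_iff.symm)
  constructor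
  · rintro ⟨a, ha, hm⟩
    simp only [Part.mem_ofOption, Option.mem_def] at ha
    simp only [Part.mem_map_iff, Part.mem_assert_iff] at hm
    obtain ⟨_, ⟨hpa, _⟩, rfl⟩ := hm
    have hx := key.1 ⟨a, ha, hpa⟩
    exact ⟨Nat.find hx, Nat.mem_rfind.2 ⟨(hr _).1 (Nat.find_spec hx),
      fun hlt => (hr' _).1 (Nat.find_min hx hlt)⟩, Part.mem_some _⟩
  · rintro ⟨x, hx, hm⟩
    obtain ⟨a, ha, hpa⟩ := key.2 ⟨x, (hr x).2 (Nat.mem_rfind.1 hx).1⟩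
    refine ⟨a, by simpa using ha, ?_⟩
    simp only [Part.mem_map_iff, Part.mem_assert_iff]
    exact ⟨(), ⟨hpa, by simp⟩, (Part.mem_some_iff.1 hm).symm⟩

theorem sig1_haltingSet : Sig1 ℕ (· ∈ haltingSet) := by
  have h : Partrec fun e : ℕ => phi e e :=
    Nat.Partrec.Code.eval_part.comp (Computable.ofNat _) Computable.id
  have := (sig1_graph_of_partrec h).exists
  simpa only [haltingSet, Set.mem_ofPred_eq, Part.dom_iff_mem] using this

theorem RecIn.sig2_graph {f : ℕ →. ℕ} (hf : RecIn (oracleOfSet haltingSet) f) :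
    Sig2 (ℕ × ℕ) fun z => z.2 ∈ f z.1 := by
  have ofP : ∀ {f : ℕ →. ℕ}, Nat.Partrec f → Sig2 (ℕ × ℕ) fun z => z.2 ∈ f z.1 :=
    fun h => (sig1_graph_of_partrec (Partrec.nat_iff.2 h)).sig2
  have hS := predClass_sig2
  have un1 : Primrec fun n : ℕ => n.unpair.1 := Primrec.fst.comp Primrec.unpair
  have un2 : Primrec fun n : ℕ => n.unpair.2 := Primrec.snd.comp Primrec.unpair
  induction hf with
  | zero => exact ofP .zero
  | succ => exact ofP .succ
  | left => exact ofP .left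
  | right => exact ofP .right
  | oracle =>
    have h1 : Sig2 (ℕ × ℕ) fun z => z.1 ∈ haltingSet ∧ z.2 = 1 :=
      hS.and (hS.comp sig1_haltingSet.sig2 Primrec.fst)
        (hS.of_primrec (PrimrecRel.comp Primrec.eq Primrec.snd (Primrec.const 1)))
    have h2 : Sig2 (ℕ × ℕ) fun z => ¬ z.1 ∈ haltingSet ∧ z.2 = 0 :=
      hS.and (hS.comp (p := fun n => ¬ n ∈ haltingSet) sig1_haltingSet.pi1_not.sig2 Primrec.fst)
        (hS.of_primrec (PrimrecRel.comp Primrec.eq Primrec.snd (Primrec.const 0)))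
    convert hS.or h1 h2 using 2 with z
    by_cases h : z.1 ∈ haltingSet <;> simp [oracleOfSet, h]
  | @pair f g _ _ hf hg =>
    convert hS.and
      (hS.comp hf (Primrec.pair Primrec.fst (un1.comp Primrec.snd)))
      (hS.comp hg (Primrec.pair Primrec.fst (un2.comp Primrec.snd))) using 2 with z
    simp only [Seq.seq, Part.mem_bind_iff, Part.map_eq_map, Part.mem_map_iff,
      exists_exists_and_eq_and]
    constructor
    · rintro ⟨a, ha, b, hb, h⟩
      rw [← h]
      simpa using ⟨ha, hb⟩
    · rintro ⟨ha, hb⟩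
      exact ⟨_, ha, _, hb, by simp⟩
  | @comp f g _ _ hf hg =>
    have h1 : Sig2 ((ℕ × ℕ) × ℕ) fun z => z.2 ∈ g z.1.1 ∧ z.1.2 ∈ f z.2 :=
      hS.and (hS.comp hg (Primrec.pair (Primrec.fst.comp Primrec.fst) Primrec.snd))
        (hS.comp hf (Primrec.pair Primrec.snd (Primrec.snd.comp Primrec.fst)))
    convert h1.exists using 2 with z
    exact Part.mem_bind_iff.trans (by simp)
  | @prec f g _ _ hf hg =>
    have pl : Primrec fun z : (ℕ × ℕ) × List ℕ => z.2 := Primrec.snd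
    have pa : Primrec fun z : (ℕ × ℕ) × List ℕ => z.1.1.unpair.1 :=
      un1.comp (Primrec.fst.comp Primrec.fst)
    have pn : Primrec fun z : (ℕ × ℕ) × List ℕ => z.1.1.unpair.2 :=
      un2.comp (Primrec.fst.comp Primrec.fst)
    have hget : Primrec₂ fun (l : List ℕ) (j : ℕ) => l.getD j 0 := Primrec.list_getD 0
    have h1 : Sig2 ((ℕ × ℕ) × List ℕ) fun z => z.2.getD 0 0 ∈ f z.1.1.unpair.1 :=
      hS.comp hf (Primrec.pair pa (hget.comp pl (Primrec.const 0)))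
    have h2 : Sig2 ((ℕ × ℕ) × List ℕ) fun z => z.2.getD z.1.1.unpair.2 0 = z.1.2 :=
      hS.of_primrec (PrimrecRel.comp Primrec.eq (hget.comp pl pn)
        (Primrec.snd.comp Primrec.fst))
    have h3 : Sig2 (((ℕ × ℕ) × List ℕ) × ℕ) fun z => z.1.2.getD (z.2 + 1) 0 ∈
        g (Nat.pair z.1.1.1.unpair.1 (Nat.pair z.2 (z.1.2.getD z.2 0))) :=
      hS.comp hg (Primrec.pair
        (Primrec₂.natPair.comp (pa.comp Primrec.fst) (Primrec₂.natPair.comp Primrec.snd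
          (hget.comp (pl.comp Primrec.fst) Primrec.snd)))
        (hget.comp (pl.comp Primrec.fst) (Primrec.succ.comp Primrec.snd)))
    have h4 := (hS.and (hS.and h1 (hS.ball_lt h3 pn)) h2).exists
    convert h4 using 2 with z
    obtain ⟨v, m⟩ := z
    simp only [Nat.unpaired]
    generalize v.unpair.1 = a
    generalize v.unpair.2 = n
    constructor
    · intro h
      suffices H : ∀ n m, m ∈ (Nat.rec (f a) (fun y IH => do
          let i ← IH
          g (Nat.pair a (Nat.pair y i))) n : Part ℕ) → ∃ F : ℕ → ℕ, F 0 ∈ f a ∧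
            (∀ j < n, F (j + 1) ∈ g (Nat.pair a (Nat.pair j (F j)))) ∧ F n = m by
        obtain ⟨F, h1, h2, h3⟩ := H n m h
        refine ⟨(List.range (n + 1)).map F, ⟨by simpa using h1, fun j hj => ?_⟩, ?_⟩
        · have e1 : ((List.range (n + 1)).map F).getD (j + 1) 0 = F (j + 1) := by
            simp [List.getD_eq_getElem?_getD, hj]
          have e2 : ((List.range (n + 1)).map F).getD j 0 = F j := by
            simp [List.getD_eq_getElem?_getD, Nat.lt_succ_of_lt hj]
          rw [e1, e2]
          exact h2 j hj
        · simpa [List.getD_eq_getElem?_getD] using h3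
      intro n
      induction n with
      | zero => exact fun m hm => ⟨fun _ => m, hm, by simp, rfl⟩
      | succ n ih =>
        intro m hm
        simp only [Part.bind_eq_bind, Part.mem_bind_iff] at hm
        obtain ⟨i, hi, hm⟩ := hm
        obtain ⟨F, h1, h2, h3⟩ := ih i hi
        refine ⟨Function.update F (n + 1) m, by simpa [Function.update] using h1, fun j hj => ?_,
          by simp⟩
        rw [Function.update_of_ne (by omega : j ≠ n + 1)]
        rcases Nat.lt_succ_iff_lt_or_eq.1 hj with hj' | rfl
        · rw [Function.update_of_ne (by omega : j + 1 ≠ n + 1)]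
          exact h2 j hj'
        · simpa [h3] using hm
    · rintro ⟨l, ⟨h1, h2⟩, rfl⟩
      induction n with
      | zero => exact h1
      | succ n ih =>
        simp only [Part.bind_eq_bind, Part.mem_bind_iff]
        exact ⟨_, ih fun j hj => h2 j (by omega), h2 n (by omega)⟩
  | @rfind f _ hf =>
    have h1 : Sig2 (ℕ × ℕ) fun z => 0 ∈ f (Nat.pair z.1 z.2) :=
      hS.comp hf (Primrec.pair (Primrec₂.natPair.comp Primrec.fst Primrec.snd) (Primrec.const 0))
    have h2 : Sig2 (((ℕ × ℕ) × ℕ) × ℕ) fun z => z.2 ≠ 0 ∧ z.2 ∈ f (Nat.pair z.1.1.1 z.1.2) :=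
      hS.and (hS.of_primrec (PrimrecRel.comp Primrec.eq Primrec.snd (Primrec.const 0)).not)
        (hS.comp hf (Primrec.pair (Primrec₂.natPair.comp
          (Primrec.fst.comp (Primrec.fst.comp Primrec.fst))
          (Primrec.snd.comp Primrec.fst)) Primrec.snd))
    convert hS.and h1 (hS.ball_lt h2.exists Primrec.snd) using 2 with z
    refine Nat.mem_rfind.trans ?_
    simp [and_comm]

theorem CEPredIn.sig2 {α : Type} [Primcodable α] {p : α → Prop}
    (hp : CEPredIn (oracleOfSet haltingSet) p) : Sig2 α p := by
  have h := predClass_sig2.comp (RecIn.sig2_graph hp)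
    (Primrec.pair Primrec.encode (Primrec.const (α := α) 0))
  convert h using 2 with a
  simp only [Encodable.encodek, Part.coe_some, Part.bind_some, Part.mem_map_iff,
    Part.mem_assert_iff]
  constructor
  · intro h
    exact ⟨(), ⟨h, by simp⟩, rfl⟩
  · rintro ⟨_, ⟨h, _⟩, _⟩
    exact h

/-! ### Finite strings and the fair-coin measure -/

/-- The list of all binary strings of length `n`. -/
def allStr (n : ℕ) : List Str :=
  Nat.rec [[]] (fun _ l => l.map (List.cons false) ++ l.map (List.cons true)) n

theorem mem_allStr {n : ℕ} {x : Str} : x ∈ allStr n ↔ x.length = n := by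
  induction n generalizing x with
  | zero => simp [allStr]
  | succ n ih =>
    have h : allStr (n + 1) =
      (allStr n).map (List.cons false) ++ (allStr n).map (List.cons true) := rfl
    rw [h]
    cases x with
    | nil => simp
    | cons a x => cases a <;> simp [ih]

theorem nodup_allStr (n : ℕ) : (allStr n).Nodup := by
  induction n with
  | zero => simp [allStr]
  | succ n ih =>
    refine List.Nodup.append (ih.map (List.cons_injective)) (ih.map (List.cons_injective)) ?_
    intro x hx hy
    simp only [List.mem_map] at hx hy
    obtain ⟨y, -, rfl⟩ := hx
    obtain ⟨z, -, hz⟩ := hy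
    simp at hz

theorem length_allStr (n : ℕ) : (allStr n).length = 2 ^ n := by
  induction n with
  | zero => rfl
  | succ n ih =>
    change ((allStr n).map (List.cons false) ++ (allStr n).map (List.cons true)).length = _
    simp [ih, pow_succ]
    ring

theorem primrec_allStr : Primrec allStr :=
  Primrec.nat_rec₁ _ (Primrec.list_append.comp
    (Primrec.list_map Primrec.snd (Primrec.list_cons.comp (Primrec.const false) Primrec.snd))
    (Primrec.list_map Primrec.snd (Primrec.list_cons.comp (Primrec.const true) Primrec.snd)))

theorem length_le_of_nodup_subset {α : Type} {l l' : List α} (h : l.Nodup) (hs : l ⊆ l') :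
    l.length ≤ l'.length :=
  (List.subperm_of_subset h hs).length_le

theorem length_lt_of_nodup_of_length_lt {l : List Str} (hl : l.Nodup) {m : ℕ}
    (h : ∀ x ∈ l, x.length < m) : l.length < 2 ^ m := by
  have h1 : l ⊆ (List.range m).flatMap allStr := by
    intro x hx
    simp only [List.mem_flatMap, List.mem_range, mem_allStr]
    exact ⟨_, h x hx, rfl⟩
  have h2 : ∀ m, ((List.range m).flatMap allStr).length < 2 ^ m := by
    intro m
    induction m with
    | zero => simp
    | succ m ih =>
      rw [List.range_succ, List.flatMap_append, List.length_append, pow_succ]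
      simp only [List.flatMap_cons, List.flatMap_nil, List.append_nil, length_allStr]
      omega
  exact (length_le_of_nodup_subset hl h1).trans_lt (h2 m)

@[simp]
theorem length_pre (X : Seq) (n : ℕ) : (pre X n).length = n := by simp [pre]

theorem take_pre (X : Seq) {m n : ℕ} (h : m ≤ n) : (pre X n).take m = pre X m := by
  apply List.ext_getElem
  · simp [h]
  · intro i h1 h2
    simp [pre]

theorem mem_cyl {X : Seq} {σ : Str} : X ∈ cyl σ ↔ pre X σ.length = σ := Iff.rfl

theorem measurableSet_cyl (σ : Str) : MeasurableSet (cyl σ) := by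
  have h : cyl σ = ⋂ i : Fin σ.length, (fun X : Seq => X i) ⁻¹' {σ[i]} := by
    ext X
    simp only [mem_cyl, Set.mem_iInter, Set.mem_preimage, Set.mem_singleton_iff]
    constructor
    · intro h i
      have : (pre X σ.length)[(i : ℕ)]'(by simp) = σ[i] := by simp [h]
      simpa [pre] using this
    · intro h
      refine List.ext_getElem (by simp) fun i h1 h2 => ?_
      simpa [pre] using h ⟨i, h2⟩
  rw [h]
  exact MeasurableSet.iInter fun i => measurable_pi_apply _ (measurableSet_singleton _)

theorem setOf_pre_eq (P : Str → Prop) (n : ℕ) :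
    {X : Seq | P (pre X n)} = ⋃ x ∈ ((allStr n).filter (fun x => P x)).toFinset, cyl x := by
  ext X
  simp only [Set.mem_ofPred_eq, Set.mem_iUnion, List.mem_toFinset, List.mem_filter, mem_allStr,
    decide_eq_true_eq, exists_prop, mem_cyl]
  constructor
  · intro h
    exact ⟨pre X n, ⟨by simp, h⟩, by simp⟩
  · rintro ⟨x, ⟨rfl, h⟩, hx⟩
    rwa [hx]

theorem measurableSet_pre (P : Str → Prop) (n : ℕ) : MeasurableSet {X : Seq | P (pre X n)} := by
  rw [setOf_pre_eq]
  exact Finset.measurableSet_biUnion _ fun x _ => measurableSet_cyl x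

theorem FairCoin.isProbabilityMeasure {μ : MeasureTheory.Measure Seq} (hμ : FairCoin μ) :
    MeasureTheory.IsProbabilityMeasure μ := by
  refine ⟨?_⟩
  have h : cyl [] = Set.univ := by
    ext X
    simp [mem_cyl, pre]
  simpa [h] using hμ []

theorem FairCoin.real_pre {μ : MeasureTheory.Measure Seq} (hμ : FairCoin μ) (P : Str → Prop)
    (n : ℕ) :
    μ.real {X : Seq | P (pre X n)} = ((allStr n).filter (fun x => P x)).length / 2 ^ n := by
  have := hμ.isProbabilityMeasure
  rw [setOf_pre_eq, MeasureTheory.measureReal_biUnion_finset]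
  · rw [Finset.sum_congr rfl (g := fun _ => (1 / 2 ^ n : ℝ)), Finset.sum_const,
      List.toFinset_card_of_nodup ((nodup_allStr n).filter _)]
    · simp [div_eq_mul_inv]
    · intro x hx
      simp only [List.mem_toFinset, List.mem_filter, mem_allStr] at hx
      rw [MeasureTheory.measureReal_def, hμ x, hx.1]
      simp
  · intro x hx y hy hxy
    simp only [Finset.mem_coe, List.mem_toFinset, List.mem_filter, mem_allStr] at hx hy
    refine Set.disjoint_left.2 fun X h1 h2 => hxy ?_
    rw [mem_cyl] at h1 h2
    rw [← h1, ← h2, hx.1, hy.1]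
  · exact fun x _ => measurableSet_cyl x

theorem Cplx_le_of_mem {M : Str →. Str} {x σ : Str} (h : x ∈ M σ) : Cplx M x ≤ σ.length :=
  sInf_le ⟨σ, h, rfl⟩

theorem Cplx_lt_iff {M : Str →. Str} {x : Str} {m : ℕ∞} :
    Cplx M x < m ↔ ∃ σ, x ∈ M σ ∧ (σ.length : ℕ∞) < m := by
  rw [Cplx, sInf_lt_iff]
  constructor
  · rintro ⟨_, ⟨σ, h, rfl⟩, h'⟩
    exact ⟨σ, h, h'⟩
  · rintro ⟨σ, h, h'⟩
    exact ⟨_, ⟨σ, h, rfl⟩, h'⟩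

/-! ### Covering eventually compressible sequences

For a predicate `G` on pairs `(c, x)`, the sequences `X` with `G (c, X↾n)` for all large `n` are
covered by an open set of small measure that is enumerable with the help of the halting problem. -/

/-- The number of `true` entries of a binary string. -/
def nTrue (b : Str) : ℕ := b.foldr (fun a n => cond a (n + 1) n) 0

theorem primrec_nTrue : Primrec nTrue := by
  have h : Primrec₂ fun (_ : Str) (z : Bool × ℕ) => cond z.1 (z.2 + 1) z.2 :=
    Primrec.cond (Primrec.fst.comp Primrec.snd)
      (Primrec.succ.comp (Primrec.snd.comp Primrec.snd)) (Primrec.snd.comp Primrec.snd)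
  exact Primrec.list_foldr Primrec.id (Primrec.const 0) h

/-- The prefixes of `x` of length between `k` and `t` all satisfy `G c`. -/
def Late (G : ℕ × Str → Prop) (c k t : ℕ) (x : Str) : Prop :=
  ∀ n < t + 1, k ≤ n → G (c, x.take n)

/-- Membership in the union of the sets `Late` for the accepted stages of the history `b`, whose
most recent entry comes first. -/
def Cov (G : ℕ × Str → Prop) (c : ℕ) : Str → Str → Prop
  | [], _ => False
  | a :: b, x => (a = true ∧ Late G c (nTrue b) b.length x) ∨ Cov G c b x

/-- The measure allowed for a cover with `k` accepted stages. -/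
noncomputable def budget (c k : ℕ) : ℝ := (1 / 2) ^ c * (2 - (1 / 2) ^ k)

/-- Accepting the next stage after the history `b` exceeds the allowed measure. -/
def Viol (μ : MeasureTheory.Measure Seq) (G : ℕ × Str → Prop) (c : ℕ) (b : Str) : Prop :=
  ∃ n, b.length < n ∧ budget c (nTrue b + 1) <
    μ.real {X | G (c, pre X n) ∨ Cov G c (true :: b) (pre X n)}

/-- The history of accepted and rejected stages. -/
noncomputable def hist (μ : MeasureTheory.Measure Seq) (G : ℕ × Str → Prop) (c : ℕ) : ℕ → Str
  | 0 => []
  | t + 1 => decide (¬ Viol μ G c (hist μ G c t)) :: hist μ G c t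

section

variable {μ : MeasureTheory.Measure Seq} {G : ℕ × Str → Prop} {c : ℕ}

theorem late_pre {k t n : ℕ} (h : t ≤ n) (X : Seq) :
    Late G c k t (pre X n) ↔ ∀ j ≤ t, k ≤ j → G (c, pre X j) := by
  simp only [Late, Nat.lt_succ_iff]
  refine forall₂_congr fun j hj => ?_
  rw [take_pre X (hj.trans h)]

theorem cov_pre {b : Str} {m n : ℕ} (hm : b.length ≤ m) (hn : b.length ≤ n) (X : Seq) :
    Cov G c b (pre X m) ↔ Cov G c b (pre X n) := by
  induction b with
  | nil => rfl
  | cons a b ih =>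
    simp only [List.length_cons] at hm hn
    simp only [Cov]
    rw [late_pre (by omega), late_pre (by omega), ih (by omega) (by omega)]

@[simp]
theorem length_hist (t : ℕ) : (hist μ G c t).length = t := by
  induction t with
  | zero => rfl
  | succ t ih => simp [hist, ih]

theorem real_cov_le (hG : ∀ n, μ.real {X | G (c, pre X n)} ≤ (1 / 2) ^ c) (t n : ℕ) (h : t ≤ n) :
    μ.real {X | G (c, pre X n) ∨ Cov G c (hist μ G c t) (pre X n)} ≤
      budget c (nTrue (hist μ G c t)) := by
  induction t with
  | zero =>
    have := hG n
    norm_num [hist, Cov, nTrue, budget] at this ⊢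
    exact this
  | succ t ih =>
    by_cases hv : Viol μ G c (hist μ G c t)
    · simpa [hist, hv, Cov, nTrue] using ih (by omega)
    · have h1 : hist μ G c (t + 1) = true :: hist μ G c t := by simp [hist, hv]
      rw [h1]
      exact not_lt.1 fun h2 => hv ⟨n, by simpa using h, h2⟩

theorem exists_accepted [MeasureTheory.IsProbabilityMeasure μ]
    (hG : ∀ n, μ.real {X | G (c, pre X n)} ≤ (1 / 2) ^ c) (k : ℕ) :
    ∃ t, nTrue (hist μ G c t) = k ∧ ¬ Viol μ G c (hist μ G c t) := by
  have key : ∀ k, (∃ t, nTrue (hist μ G c t) = k) →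
      ∃ t, nTrue (hist μ G c t) = k ∧ ¬ Viol μ G c (hist μ G c t) := by
    rintro k ⟨s, hs⟩
    by_contra! hcon
    have hk : ∀ t, s ≤ t → nTrue (hist μ G c t) = k := by
      intro t ht
      induction t, ht using Nat.le_induction with
      | base => exact hs
      | succ t ht ih => simpa [hist, hcon t ih, nTrue] using ih
    let E : ℕ → Set Seq := fun t => {X | ∀ j ≤ t, k ≤ j → G (c, pre X j)}
    have hE : ∀ t, MeasurableSet (E t) := by
      intro t
      have : E t = {X | Late G c k t (pre X t)} := by
        ext X
        exact (late_pre le_rfl X).symm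
      rw [this]
      exact measurableSet_pre _ _
    have hanti : Antitone E := fun t u htu X hX j hj => hX j (hj.trans htu)
    have hlim : Filter.Tendsto (fun t => μ.real (E t)) Filter.atTop
        (nhds (μ.real (⋂ t, E t))) := by
      have := MeasureTheory.tendsto_measure_iInter_atTop (μ := μ)
        (fun t => (hE t).nullMeasurableSet) hanti ⟨0, MeasureTheory.measure_ne_top _ _⟩
      exact (ENNReal.tendsto_toReal (MeasureTheory.measure_ne_top _ _)).comp this
    have hpos : (0 : ℝ) < (1 / 2) ^ c * (1 / 2) ^ (k + 1) := by positivity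
    obtain ⟨t, ht1, ht⟩ := ((hlim.eventually (gt_mem_nhds (lt_add_of_pos_right _ hpos))).and
      (Filter.eventually_ge_atTop (max s k))).exists
    have hkt := hk t ((le_max_left _ _).trans ht)
    obtain ⟨n, hn, hv⟩ := hcon t hkt
    rw [length_hist] at hn
    rw [hkt] at hv
    have hinv := real_cov_le hG t n hn.le
    rw [hkt] at hinv
    have hsub : {X | G (c, pre X n) ∨ Cov G c (true :: hist μ G c t) (pre X n)} ⊆
        {X | G (c, pre X n) ∨ Cov G c (hist μ G c t) (pre X n)} ∪ (E t \ ⋂ t, E t) := by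
      intro X hX
      by_cases hD : G (c, pre X n)
      · exact Or.inl (Or.inl hD)
      rcases hX with hX | hX | hX
      · exact Or.inl (Or.inl hX)
      · refine Or.inr ⟨?_, fun h => hD ?_⟩
        · have := hX.2
          rw [hkt, length_hist, late_pre hn.le] at this
          exact this
        · exact Set.mem_iInter.1 h n n le_rfl (((le_max_right _ _).trans ht).trans hn.le)
      · exact Or.inl (Or.inr hX)
    have h1 := (MeasureTheory.measureReal_mono (μ := μ) hsub).trans
      (MeasureTheory.measureReal_union_le _ _)
    have h2 : μ.real (E t \ ⋂ t, E t) = μ.real (E t) - μ.real (⋂ t, E t) :=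
      MeasureTheory.measureReal_sdiff (Set.iInter_subset E t) (MeasurableSet.iInter hE)
    have h3 : budget c (k + 1) = budget c k + (1 / 2) ^ c * (1 / 2) ^ (k + 1) := by
      simp only [budget, pow_succ]
      ring
    linarith
  induction k with
  | zero => exact key 0 ⟨0, rfl⟩
  | succ k ih =>
    obtain ⟨t, ht, hv⟩ := ih
    exact key (k + 1) ⟨t + 1, by simpa [hist, hv, nTrue] using ht⟩

theorem measure_iUnion_cov_le [MeasureTheory.IsProbabilityMeasure μ]
    (hG : ∀ n, μ.real {X | G (c, pre X n)} ≤ (1 / 2) ^ c) :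
    μ (⋃ t, {X | Cov G c (hist μ G c t) (pre X t)}) ≤ 2 * 2⁻¹ ^ c := by
  rw [Monotone.measure_iUnion]
  · refine iSup_le fun t => ?_
    have h1 : μ.real {X | Cov G c (hist μ G c t) (pre X t)} ≤ 2 * (1 / 2) ^ c := by
      refine (MeasureTheory.measureReal_mono fun X hX => Or.inr hX).trans
        ((real_cov_le hG t t le_rfl).trans ?_)
      have h2 : (0 : ℝ) < (1 / 2) ^ c := by positivity
      have h3 : (0 : ℝ) < (1 / 2) ^ nTrue (hist μ G c t) := by positivity
      unfold budget
      nlinarith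
    rw [MeasureTheory.measureReal_def] at h1
    rw [← ENNReal.ofReal_toReal (MeasureTheory.measure_ne_top μ _)]
    refine (ENNReal.ofReal_le_ofReal h1).trans_eq ?_
    rw [ENNReal.ofReal_mul (by norm_num), ENNReal.ofReal_pow (by norm_num)]
    simp
  · refine monotone_nat_of_le_succ fun t X hX => ?_
    refine Or.inr ?_
    exact (cov_pre (by simp) (by simp) X).1 hX

theorem exists_cov [MeasureTheory.IsProbabilityMeasure μ]
    (hG : ∀ n, μ.real {X | G (c, pre X n)} ≤ (1 / 2) ^ c) {A : Seq} {m : ℕ}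
    (hA : ∀ n, m ≤ n → G (c, pre A n)) : ∃ t, Cov G c (hist μ G c t) (pre A t) := by
  obtain ⟨t, ht, hv⟩ := exists_accepted (μ := μ) hG m
  refine ⟨t + 1, Or.inl ⟨by simpa using hv, ?_⟩⟩
  rw [late_pre (by simp), ht]
  exact fun j _ => hA j

end

theorem nodup_iff_idxOf_getD {l : List Str} :
    l.Nodup ↔ ∀ i < l.length, l.idxOf (l.getD i []) = i := by
  constructor
  · intro h i hi
    rw [List.getD_eq_getElem _ _ hi]
    exact h.idxOf_getElem i hi
  · intro h
    rw [List.nodup_iff_injective_getElem]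
    intro i j hij
    have hi := h i i.2
    have hj := h j j.2
    rw [List.getD_eq_getElem _ _ i.2] at hi
    rw [List.getD_eq_getElem _ _ j.2] at hj
    dsimp only at hij
    rw [hij, hj] at hi
    exact Fin.ext hi.symm

theorem le_length_filter_iff {P : Str → Prop} {m n : ℕ} :
    m ≤ ((allStr n).filter (fun x => P x)).length ↔
      ∃ l : List Str, m ≤ l.length ∧ (∀ i < l.length, l.idxOf (l.getD i []) = i) ∧
        ∀ x ∈ l, x.length = n ∧ P x := by
  simp only [← nodup_iff_idxOf_getD]
  constructor
  · intro h
    refine ⟨_, h, (nodup_allStr n).filter _, fun x hx => ?_⟩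
    simpa [mem_allStr] using hx
  · rintro ⟨l, hm, hl, h⟩
    refine hm.trans (length_le_of_nodup_subset hl fun x hx => ?_)
    simpa [mem_allStr] using h x hx

theorem Sig1.le_length_filter {α : Type} [Primcodable α] {P : α × Str → Prop}
    (hP : Sig1 (α × Str) P) :
    Sig1 (α × ℕ × ℕ) fun z => z.2.2 ≤ ((allStr z.2.1).filter (fun x => P (z.1, x))).length := by
  simp only [le_length_filter_iff]
  have hS := predClass_sig1
  refine Sig1.exists (p := fun w : (α × ℕ × ℕ) × List Str => w.1.2.2 ≤ w.2.length ∧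
    (∀ i < w.2.length, w.2.idxOf (w.2.getD i []) = i) ∧
      ∀ x ∈ w.2, x.length = w.1.2.1 ∧ P (w.1.1, x)) (hS.and ?_ (hS.and ?_ ?_))
  · exact hS.of_primrec (Primrec.nat_le.comp
      (Primrec.snd.comp (Primrec.snd.comp Primrec.fst)) (Primrec.list_length.comp Primrec.snd))
  · refine hS.ball_lt (p := fun w : ((α × ℕ × ℕ) × List Str) × ℕ =>
      w.1.2.idxOf (w.1.2.getD w.2 []) = w.2) (hS.of_primrec ?_)
      (Primrec.list_length.comp Primrec.snd)
    refine PrimrecRel.comp Primrec.eq ?_ Primrec.snd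
    have h : Primrec fun w : ((α × ℕ × ℕ) × List Str) × ℕ => w.1.2 :=
      Primrec.snd.comp Primrec.fst
    convert Primrec.list_idxOf.comp ((Primrec.list_getD []).comp h Primrec.snd) h
  · refine hS.ball_list (p := fun w : ((α × ℕ × ℕ) × List Str) × Str =>
      w.2.length = w.1.1.2.1 ∧ P (w.1.1.1, w.2))
      (hS.and ?_ ?_) Primrec.snd
    · exact hS.of_primrec (PrimrecRel.comp Primrec.eq (Primrec.list_length.comp Primrec.snd)
        (Primrec.fst.comp (Primrec.snd.comp (Primrec.fst.comp Primrec.fst))))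
    · exact hS.comp hP (Primrec.pair (Primrec.fst.comp (Primrec.fst.comp Primrec.fst)) Primrec.snd)

section

variable {μ : MeasureTheory.Measure Seq} {G : ℕ × Str → Prop}

theorem cov_iff {c : ℕ} {b x : Str} : Cov G c b x ↔ ∃ j, j < b.length ∧ b.getD j false = true ∧
    Late G c (nTrue (b.drop (j + 1))) (b.drop (j + 1)).length x := by
  induction b with
  | nil => simp [Cov]
  | cons a b ih =>
    rw [Cov, ih]
    constructor
    · rintro (h | ⟨j, hj, h⟩)
      · exact ⟨0, by simp, by simpa using h⟩
      · exact ⟨j + 1, by simpa using hj, by simpa using h⟩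
    · rintro ⟨_ | j, hj, h⟩
      · exact Or.inl (by simpa using h)
      · exact Or.inr ⟨j, by simpa using hj, by simpa using h⟩

theorem _root_.Primrec.nat_pow_const (k : ℕ) : Primrec fun n : ℕ => k ^ n := by
  have : Primrec fun n : ℕ => Nat.rec (motive := fun _ => ℕ) 1 (fun _ y => y * k) n :=
    Primrec.nat_rec₁ _ (Primrec.nat_mul.comp Primrec.snd (Primrec.const k))
  convert this using 2 with n
  induction n with
  | zero => rfl
  | succ n ih => simp only [pow_succ, ih]

theorem sig1_late (hG : Sig1 (ℕ × Str) G) :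
    Sig1 ((ℕ × ℕ × ℕ) × Str) fun z => Late G z.1.1 z.1.2.1 z.1.2.2 z.2 := by
  have hS := predClass_sig1
  have h1 : Sig1 (((ℕ × ℕ × ℕ) × Str) × ℕ) fun w =>
      w.2 < w.1.1.2.1 ∨ G (w.1.1.1, w.1.2.take w.2) :=
    hS.or (hS.of_primrec (Primrec.nat_lt.comp Primrec.snd
      (Primrec.fst.comp (Primrec.snd.comp (Primrec.fst.comp Primrec.fst)))))
      (hS.comp hG (Primrec.pair (Primrec.fst.comp (Primrec.fst.comp Primrec.fst))
        (Primrec.list_take.comp Primrec.snd (Primrec.snd.comp Primrec.fst))))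
  have h2 := hS.ball_lt h1 (Primrec.succ.comp (Primrec.snd.comp (Primrec.snd.comp Primrec.fst)))
  convert h2 using 2 with z
  refine forall₂_congr fun n _ => ?_
  rw [← not_le, ← imp_iff_not_or]

theorem sig1_cov (hG : Sig1 (ℕ × Str) G) :
    Sig1 ((ℕ × Str) × Str) fun z => Cov G z.1.1 z.1.2 z.2 := by
  have hS := predClass_sig1
  simp only [cov_iff]
  have hb : Primrec fun w : ((ℕ × Str) × Str) × ℕ => w.1.1.2 :=
    Primrec.snd.comp (Primrec.fst.comp Primrec.fst)
  have hd : Primrec fun w : ((ℕ × Str) × Str) × ℕ => w.1.1.2.drop (w.2 + 1) :=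
    Primrec.list_drop.comp (Primrec.succ.comp Primrec.snd) hb
  refine Sig1.exists (p := fun w : ((ℕ × Str) × Str) × ℕ => w.2 < w.1.1.2.length ∧
    w.1.1.2.getD w.2 false = true ∧ Late G w.1.1.1 (nTrue (w.1.1.2.drop (w.2 + 1)))
      (w.1.1.2.drop (w.2 + 1)).length w.1.2) (hS.and ?_ (hS.and ?_ ?_))
  · exact hS.of_primrec (Primrec.nat_lt.comp Primrec.snd (Primrec.list_length.comp hb))
  · exact hS.of_primrec (PrimrecRel.comp Primrec.eq
      ((Primrec.list_getD false).comp hb Primrec.snd) (Primrec.const true))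
  · exact hS.comp (sig1_late hG) (Primrec.pair (Primrec.pair
      (Primrec.fst.comp (Primrec.fst.comp Primrec.fst)) (Primrec.pair (primrec_nTrue.comp hd)
        (Primrec.list_length.comp hd))) (Primrec.snd.comp Primrec.fst))

theorem budget_lt_iff {c k n m : ℕ} :
    budget c (k + 1) < (m : ℝ) / 2 ^ n ↔ 2 ^ (n + k + 2) < m * 2 ^ (c + k + 1) + 2 ^ n := by
  have h : budget c (k + 1) = (2 ^ (k + 2) - 1) / 2 ^ (c + k + 1) := by
    rw [budget, eq_div_iff (by positivity)]
    simp only [pow_add, pow_succ, one_div, inv_pow]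
    field_simp
  rw [h, div_lt_div_iff₀ (by positivity) (by positivity), ← Nat.cast_lt (α := ℝ)]
  push_cast
  constructor <;> intro h' <;> simp only [pow_add] at h' ⊢ <;> linarith

theorem viol_iff (hμ : FairCoin μ) {c : ℕ} {b : Str} : Viol μ G c b ↔
    ∃ w : ℕ × ℕ, b.length < w.1 ∧
      2 ^ (w.1 + nTrue b + 2) < w.2 * 2 ^ (c + nTrue b + 1) + 2 ^ w.1 ∧
      w.2 ≤ ((allStr w.1).filter (fun x => G (c, x) ∨ Cov G c (true :: b) x)).length := by
  have h := fun n => hμ.real_pre (fun x => G (c, x) ∨ Cov G c (true :: b) x) n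
  simp only [Viol, h, budget_lt_iff]
  constructor
  · rintro ⟨n, hn, h⟩
    refine ⟨(n, _), hn, h, Eq.le ?_⟩
    congr!
  · rintro ⟨⟨n, m⟩, hn, h, hm⟩
    refine ⟨n, hn, h.trans_le ?_⟩
    gcongr
    refine hm.trans (Eq.le ?_)
    congr!

theorem sig1_viol (hμ : FairCoin μ) (hG : Sig1 (ℕ × Str) G) :
    Sig1 (ℕ × Str) fun z => Viol μ G z.1 z.2 := by
  have hS := predClass_sig1
  simp only [viol_iff hμ]
  have hb : Primrec fun w : (ℕ × Str) × ℕ × ℕ => w.1.2 := Primrec.snd.comp Primrec.fst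
  have hc : Primrec fun w : (ℕ × Str) × ℕ × ℕ => w.1.1 := Primrec.fst.comp Primrec.fst
  have hn : Primrec fun w : (ℕ × Str) × ℕ × ℕ => w.2.1 := Primrec.fst.comp Primrec.snd
  have hm : Primrec fun w : (ℕ × Str) × ℕ × ℕ => w.2.2 := Primrec.snd.comp Primrec.snd
  have hk := primrec_nTrue.comp hb
  have h2 := Primrec.nat_pow_const 2
  have hGC : Sig1 ((ℕ × Str) × Str) fun z => G (z.1.1, z.2) ∨ Cov G z.1.1 (true :: z.1.2) z.2 :=
    hS.or (hS.comp hG (Primrec.pair (Primrec.fst.comp Primrec.fst) Primrec.snd))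
      (hS.comp (sig1_cov hG) (Primrec.pair (Primrec.pair (Primrec.fst.comp Primrec.fst)
        (Primrec.list_cons.comp (Primrec.const true) (Primrec.snd.comp Primrec.fst))) Primrec.snd))
  refine Sig1.exists (p := fun w : (ℕ × Str) × ℕ × ℕ => w.1.2.length < w.2.1 ∧
    2 ^ (w.2.1 + nTrue w.1.2 + 2) < w.2.2 * 2 ^ (w.1.1 + nTrue w.1.2 + 1) + 2 ^ w.2.1 ∧
    w.2.2 ≤ ((allStr w.2.1).filter
      (fun x => G (w.1.1, x) ∨ Cov G w.1.1 (true :: w.1.2) x)).length) (hS.and ?_ (hS.and ?_ ?_))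
  · exact hS.of_primrec (Primrec.nat_lt.comp (Primrec.list_length.comp hb) hn)
  · exact hS.of_primrec (Primrec.nat_lt.comp
      (h2.comp (Primrec.nat_add.comp (Primrec.nat_add.comp hn hk) (Primrec.const 2)))
      (Primrec.nat_add.comp (Primrec.nat_mul.comp hm
        (h2.comp (Primrec.nat_add.comp (Primrec.nat_add.comp hc hk) (Primrec.const 1))))
        (h2.comp hn)))
  · convert hGC.le_length_filter

theorem eq_hist_iff {c : ℕ} {b : Str} : b = hist μ G c b.length ↔
    ∀ j < b.length, (b.getD j false = false ∧ Viol μ G c (b.drop (j + 1))) ∨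
      (b.getD j false = true ∧ ¬ Viol μ G c (b.drop (j + 1))) := by
  induction b with
  | nil => simp [hist]
  | cons a b ih =>
    rw [List.length_cons, hist, List.cons.injEq]
    have h1 : (∀ j < b.length + 1, ((a :: b).getD j false = false ∧
          Viol μ G c ((a :: b).drop (j + 1))) ∨
        ((a :: b).getD j false = true ∧ ¬ Viol μ G c ((a :: b).drop (j + 1)))) ↔
        ((a = false ∧ Viol μ G c b) ∨ (a = true ∧ ¬ Viol μ G c b)) ∧
          b = hist μ G c b.length := by
      rw [ih]
      constructor
      · exact fun h => ⟨by simpa using h 0 (by simp), fun j hj => by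
          simpa using h (j + 1) (by simpa using hj)⟩
      · rintro ⟨h0, h⟩ (_ | j) hj
        · simpa using h0
        · simpa using h j (by simpa using hj)
    rw [h1, and_congr_left_iff]
    intro hb
    rw [← hb]
    by_cases hv : Viol μ G c b <;> cases a <;> simp [hv]

theorem sig2_eq_hist (hμ : FairCoin μ) (hG : Sig1 (ℕ × Str) G) :
    Sig2 (ℕ × Str) fun z => z.2 = hist μ G z.1 z.2.length := by
  have hS := predClass_sig2
  simp only [eq_hist_iff]
  have hb : Primrec fun w : (ℕ × Str) × ℕ => w.1.2 := Primrec.snd.comp Primrec.fst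
  have hg := (Primrec.list_getD false).comp hb Primrec.snd
  have hz : Primrec fun w : (ℕ × Str) × ℕ => (w.1.1, w.1.2.drop (w.2 + 1)) :=
    Primrec.pair (Primrec.fst.comp Primrec.fst)
      (Primrec.list_drop.comp (Primrec.succ.comp Primrec.snd) hb)
  have hv := sig1_viol hμ hG
  refine hS.ball_lt (p := fun w : (ℕ × Str) × ℕ =>
    (w.1.2.getD w.2 false = false ∧ Viol μ G w.1.1 (w.1.2.drop (w.2 + 1))) ∨
      (w.1.2.getD w.2 false = true ∧ ¬ Viol μ G w.1.1 (w.1.2.drop (w.2 + 1))))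
    (hS.or (hS.and ?_ ?_) (hS.and ?_ ?_)) (Primrec.list_length.comp Primrec.snd)
  · exact hS.of_primrec (PrimrecRel.comp Primrec.eq hg (Primrec.const false))
  · exact hS.comp (p := fun z => Viol μ G z.1 z.2) hv.sig2 hz
  · exact hS.of_primrec (PrimrecRel.comp Primrec.eq hg (Primrec.const true))
  · exact hS.comp (p := fun z => ¬ Viol μ G z.1 z.2) hv.pi1_not.sig2 hz

theorem sig2_cov_hist (hμ : FairCoin μ) (hG : Sig1 (ℕ × Str) G) :
    Sig2 (ℕ × Str) fun z => Cov G (z.1 + 1) (hist μ G (z.1 + 1) z.2.length) z.2 := by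
  have hS := predClass_sig2
  have hc : Primrec fun w : (ℕ × Str) × Str => w.1.1 + 1 :=
    Primrec.succ.comp (Primrec.fst.comp Primrec.fst)
  have h : Sig2 (ℕ × Str) fun z => ∃ b : Str, b.length = z.2.length ∧
      b = hist μ G (z.1 + 1) b.length ∧ Cov G (z.1 + 1) b z.2 := by
    refine Sig2.exists (p := fun w : (ℕ × Str) × Str => w.2.length = w.1.2.length ∧
      w.2 = hist μ G (w.1.1 + 1) w.2.length ∧ Cov G (w.1.1 + 1) w.2 w.1.2)
      (hS.and ?_ (hS.and ?_ ?_))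
    · exact hS.of_primrec (PrimrecRel.comp Primrec.eq (Primrec.list_length.comp Primrec.snd)
        (Primrec.list_length.comp (Primrec.snd.comp Primrec.fst)))
    · exact hS.comp (sig2_eq_hist hμ hG) (Primrec.pair hc Primrec.snd)
    · exact hS.comp (sig1_cov hG).sig2
        (Primrec.pair (Primrec.pair hc Primrec.snd) (Primrec.snd.comp Primrec.fst))
  convert h using 2 with z
  constructor
  · exact fun hz => ⟨_, by simp, by simp, hz⟩
  · rintro ⟨b, h1, h2, h3⟩
    rw [← h1, ← h2]
    exact h3

/-- A sequence whose initial segments eventually satisfy each member of a uniformly `Σ⁰₁` family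
of predicates of small measure is not `2`-random. -/
theorem not_mlRandomIn_of_eventually (hμ : FairCoin μ) (hG : Sig1 (ℕ × Str) G)
    (hGμ : ∀ c n, μ.real {X | G (c, pre X n)} ≤ (1 / 2) ^ c) {A : Seq}
    (hA : ∀ c, ∃ m, ∀ n, m ≤ n → G (c, pre A n)) :
    ¬ MLRandomIn (oracleOfSet haltingSet) μ A := by
  have := hμ.isProbabilityMeasure
  intro hR
  let V : ℕ → Set Seq := fun i =>
    ⋃ t, {X | Cov G (i + 1) (hist μ G (i + 1) t) (pre X t)}
  refine hR V ⟨{z | Cov G (z.1 + 1) (hist μ G (z.1 + 1) z.2.length) z.2},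
    (sig2_cov_hist hμ hG).cePredIn, fun i => ?_, fun i => ?_⟩ (Set.mem_iInter.2 fun i => ?_)
  · ext X
    simp only [V, Set.mem_iUnion, Set.mem_ofPred_eq, exists_prop, mem_cyl]
    constructor
    · rintro ⟨t, ht⟩
      exact ⟨pre X t, by simpa using ht, by simp⟩
    · rintro ⟨σ, hσ, hX⟩
      exact ⟨σ.length, by rwa [hX]⟩
  · refine (measure_iUnion_cov_le (hGμ (i + 1))).trans_eq ?_
    rw [pow_succ', ← mul_assoc, ENNReal.mul_inv_cancel (by norm_num) (by norm_num), one_mul]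
  · obtain ⟨m, hm⟩ := hA (i + 1)
    obtain ⟨t, ht⟩ := exists_cov (μ := μ) (hGμ (i + 1)) hm
    exact Set.mem_iUnion.2 ⟨t, ht⟩

theorem real_compressible_le (hμ : FairCoin μ) (U : Str →. Str) (c n : ℕ) :
    μ.real {X | ∃ σ, pre X n ∈ U σ ∧ σ.length + c < (pre X n).length} ≤ (1 / 2) ^ c := by
  rw [hμ.real_pre (fun x => ∃ σ, x ∈ U σ ∧ σ.length + c < x.length)]
  set l := (allStr n).filter (fun x => ∃ σ, x ∈ U σ ∧ σ.length + c < x.length) with hl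
  have hmem : ∀ x ∈ l, x.length = n ∧ ∃ σ, x ∈ U σ ∧ σ.length + c < x.length := by
    intro x hx
    simpa [hl, mem_allStr] using hx
  have hc : ∀ x ∈ l, ∃ σ, x ∈ U σ ∧ σ.length + c < n := fun x hx => by
    obtain ⟨h1, h2⟩ := hmem x hx
    simpa [h1] using h2
  choose! f hf using hc
  have h1 : (l.map f).Nodup := by
    refine List.Nodup.map_on (fun x hx y hy hxy => ?_) ((nodup_allStr n).filter _)
    have hy' := (hf y hy).1
    rw [← hxy] at hy'
    exact Part.mem_unique (hf x hx).1 hy'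
  have h2 : l.length ≤ 2 ^ (n - c) := by
    have := length_lt_of_nodup_of_length_lt h1 (m := n - c) (by
      intro σ hσ
      obtain ⟨x, hx, rfl⟩ := List.mem_map.1 hσ
      have := (hf x hx).2
      omega)
    simpa using this.le
  rw [div_le_iff₀ (by positivity), one_div, inv_pow, inv_mul_eq_div, le_div_iff₀ (by positivity)]
  rcases le_or_gt c n with hcn | hcn
  · have h3 : l.length * 2 ^ c ≤ 2 ^ n := by
      calc l.length * 2 ^ c ≤ 2 ^ (n - c) * 2 ^ c := by gcongr
        _ = 2 ^ n := by rw [← pow_add, Nat.sub_add_cancel hcn]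
    exact_mod_cast h3
  · have h3 : l = [] := by
      refine List.eq_nil_iff_forall_not_mem.2 fun x hx => ?_
      have := (hf x hx).2
      omega
    simp [h3]

theorem exists_incompressible_of_mlRandomIn (hμ : FairCoin μ) {U : Str →. Str} (hU : IsMachine U)
    {A : Seq} (hA : MLRandomIn (oracleOfSet haltingSet) μ A) :
    ∃ c : ℕ, ∀ m : ℕ, ∃ n : ℕ, m ≤ n ∧ (n : ℕ∞) ≤ Cplx U (pre A n) + c := by
  by_contra! hcon
  have hS := predClass_sig1
  have hG : Sig1 (ℕ × Str) fun z => ∃ σ, z.2 ∈ U σ ∧ σ.length + z.1 < z.2.length := by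
    refine Sig1.exists (p := fun w : (ℕ × Str) × Str =>
      w.1.2 ∈ U w.2 ∧ w.2.length + w.1.1 < w.1.2.length) (hS.and ?_ ?_)
    · exact hS.comp (sig1_graph_of_partrec hU)
        (Primrec.pair Primrec.snd (Primrec.snd.comp Primrec.fst))
    · exact hS.of_primrec (Primrec.nat_lt.comp (Primrec.nat_add.comp
        (Primrec.list_length.comp Primrec.snd) (Primrec.fst.comp Primrec.fst))
        (Primrec.list_length.comp (Primrec.snd.comp Primrec.fst)))
  refine not_mlRandomIn_of_eventually hμ hG (real_compressible_le hμ U) (fun c => ?_) hA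
  obtain ⟨m, hm⟩ := hcon c
  refine ⟨m, fun n hn => ?_⟩
  have h1 : Cplx U (pre A n) < (n : ℕ∞) - c := lt_tsub_iff_right.2 (hm n hn)
  obtain ⟨σ, h2, h3⟩ := Cplx_lt_iff.1 h1
  refine ⟨σ, h2, ?_⟩
  rw [lt_tsub_iff_right] at h3
  simpa using (by exact_mod_cast h3 : σ.length + c < n)

end

/-! ### Compressing the initial segments of sequences that are not `2`-random -/

theorem _root_.PrimrecPred.bex_lt {α : Type} [Primcodable α] {p : α × ℕ → Prop}
    (hp : PrimrecPred p) {f : α → ℕ} (hf : Primrec f) :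
    PrimrecPred fun a => ∃ j < f a, p (a, j) := by
  have h := (predClass_prim.ball_lt (K := Prim) (p := fun z => ¬ p z) hp.not hf)
  have h' := PrimrecPred.not h
  simpa only [not_forall, not_not, exists_prop] using h'

theorem primrec_filter_allStr {α : Type} [Primcodable α] {P : α × Str → Prop}
    (hP : PrimrecPred P) :
    Primrec₂ fun (n : ℕ) (a : α) => (allStr n).filter (fun x => P (a, x)) := by
  have h : PrimrecRel fun (x : Str) (a : α) => P (a, x) :=
    PrimrecPred.subst hP (Primrec.pair Primrec.snd Primrec.fst)
  exact (PrimrecRel.listFilter h).comp (primrec_allStr.comp Primrec.fst) Primrec.snd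

/-- A uniformly primitive recursive family of sets `{x ∈ 2^n | S (i, n) x}` with at most `2^(n-i)`
members contains only compressible strings for suitable `i`. -/
theorem UniversalMachine.exists_compressible {U : Str →. Str} (hU : UniversalMachine U)
    {S : (ℕ × ℕ) × Str → Prop} (hS : PrimrecPred S)
    (hcard : ∀ i n, ((allStr n).filter (fun x => S ((i, n), x))).length * 2 ^ i ≤ 2 ^ n) (c : ℕ) :
    ∃ i, ∀ x : Str, i ≤ x.length → S ((i, x.length), x) → Cplx U x + c < x.length := by
  let D : Str → Str := fun ι => ι.drop (ι.idxOf false + 1)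
  let a : Str → ℕ × ℕ := fun ι => (2 * ι.idxOf false, (D ι).length + 2 * ι.idxOf false)
  let g : Str → Option Str := fun ι =>
    ((allStr (a ι).2).filter (fun x => S (a ι, x)))[(allStr (D ι).length).idxOf (D ι)]?
  have hidx : Primrec fun ι : Str => ι.idxOf false := by
    convert Primrec.list_idxOf.comp (Primrec.const false) Primrec.id
    rfl
  have hD : Primrec D := Primrec.list_drop.comp (Primrec.succ.comp hidx) Primrec.id
  have hDl : Primrec fun ι => (D ι).length := Primrec.list_length.comp hD
  have h2 : Primrec fun ι : Str => 2 * ι.idxOf false := Primrec.nat_mul.comp (Primrec.const 2) hidx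
  have ha : Primrec a := Primrec.pair h2 (Primrec.nat_add.comp hDl h2)
  have hg : Primrec g := by
    refine Primrec.list_getElem?.comp ((primrec_filter_allStr hS).comp (Primrec.snd.comp ha) ha) ?_
    convert Primrec.list_idxOf.comp hD (primrec_allStr.comp hDl)
  let M : Str →. Str := fun ι => g ι
  have hM : IsMachine M := Computable.ofOption hg.to_comp
  obtain ⟨d, hd⟩ := hU.2 M hM
  let j := c + d + 2
  refine ⟨2 * j, fun x hx hxS => ?_⟩
  set l := (allStr x.length).filter (fun y => S ((2 * j, x.length), y)) with hl
  have hxl : x ∈ l := by simpa [hl, mem_allStr] using hxS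
  have hk : l.idxOf x < (allStr (x.length - 2 * j)).length := by
    refine (List.idxOf_lt_length_iff.2 hxl).trans_le ?_
    rw [length_allStr]
    refine Nat.le_of_mul_le_mul_right ?_ (Nat.two_pow_pos (2 * j))
    rw [← pow_add, Nat.sub_add_cancel hx]
    exact hcard (2 * j) x.length
  obtain ⟨τ, hτ⟩ : ∃ τ, τ = (allStr (x.length - 2 * j))[l.idxOf x] := ⟨_, rfl⟩
  have hτl : τ.length = x.length - 2 * j := by
    rw [← mem_allStr, hτ]
    exact List.getElem_mem _
  have hτi : (allStr (x.length - 2 * j)).idxOf τ = l.idxOf x := by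
    rw [hτ]
    exact (nodup_allStr _).idxOf_getElem _ _
  let ι : Str := List.replicate j true ++ false :: τ
  have hι : ι.idxOf false = j := by
    have : false ∉ List.replicate j true := by simp
    simp [ι, List.idxOf_append_of_notMem this]
  have hDι : D ι = τ := by
    simp only [D, hι]
    simp [ι, List.drop_append]
  have haι : a ι = (2 * j, x.length) := by
    simp only [a, hι, hDι, hτl, Nat.sub_add_cancel hx]
  have hgι : g ι = some x := by
    simp only [g, haι, hDι, hτl, hτi, ← hl]
    rw [List.getElem?_eq_getElem (List.idxOf_lt_length_iff.2 hxl)]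
    simp
  have hxM : x ∈ M ι := by simp [M, hgι]
  have hlen : ι.length + d + c < x.length := by
    simp only [ι, List.length_append, List.length_replicate, List.length_cons, hτl]
    omega
  calc Cplx U x + c ≤ Cplx M x + d + c := by gcongr; exact hd x
    _ ≤ (ι.length : ℕ∞) + d + c := by gcongr; exact Cplx_le_of_mem hxM
    _ < x.length := by exact_mod_cast hlen

/-- The string coded by the candidate `e`. -/
def candStr (e : ℕ) : Str := (Encodable.decode (α := Str) e.unpair.1).getD []

theorem primrec_candStr : Primrec candStr :=
  Primrec.option_getD.comp (Primrec.decode.comp (Primrec.fst.comp Primrec.unpair))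
    (Primrec.const [])

/-- The candidate `e` for the `i`-th component of a test looks correct at stage `n`. -/
def Live (r : ((ℕ × Str) × ℕ) × ℕ → Prop) (z : (ℕ × ℕ) × ℕ) : Prop :=
  (candStr z.2).length ≤ z.1.2 ∧ ∀ y < z.1.2, ¬ r (((z.1.1, candStr z.2), z.2.unpair.2), y)

/-- The string `x` extends a candidate below `e` that looks correct. -/
def LiveBelow (r : ((ℕ × Str) × ℕ) × ℕ → Prop) (z : ((ℕ × ℕ) × ℕ) × Str) : Prop :=
  ∃ e < z.1.2 + 1, Live r (z.1.1, e) ∧ z.2.take (candStr e).length = candStr e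

/-- The candidates up to `e` that look correct cover at most the allowed measure. -/
def Small (r : ((ℕ × Str) × ℕ) × ℕ → Prop) (z : (ℕ × ℕ) × ℕ) : Prop :=
  ((allStr z.1.2).filter (fun x => LiveBelow r (z, x))).length * 2 ^ z.1.1 ≤ 2 ^ z.1.2

/-- The approximation at stage `n` to the `i`-th component of a test, trimmed to the allowed
measure. -/
def Approx (r : ((ℕ × Str) × ℕ) × ℕ → Prop) (z : (ℕ × ℕ) × Str) : Prop :=
  ∃ e < z.1.2, Live r (z.1, e) ∧ z.2.take (candStr e).length = candStr e ∧ Small r (z.1, e)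

section

variable {r : ((ℕ × Str) × ℕ) × ℕ → Prop}

theorem primrecPred_live (hr : PrimrecPred r) : PrimrecPred (Live r) := by
  have hσ : Primrec fun z : (ℕ × ℕ) × ℕ => candStr z.2 := primrec_candStr.comp Primrec.snd
  have hn : Primrec fun z : (ℕ × ℕ) × ℕ => z.1.2 := Primrec.snd.comp Primrec.fst
  refine PrimrecPred.and (Primrec.nat_le.comp (Primrec.list_length.comp hσ) hn)
    (predClass_prim.ball_lt (K := Prim) (p := fun w : ((ℕ × ℕ) × ℕ) × ℕ =>
      ¬ r (((w.1.1.1, candStr w.1.2), w.1.2.unpair.2), w.2)) ?_ hn)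
  refine PrimrecPred.not (PrimrecPred.subst hr (Primrec.pair (Primrec.pair (Primrec.pair ?_ ?_) ?_)
    Primrec.snd))
  · exact Primrec.fst.comp (Primrec.fst.comp Primrec.fst)
  · exact hσ.comp Primrec.fst
  · exact Primrec.snd.comp (Primrec.unpair.comp (Primrec.snd.comp Primrec.fst))

theorem primrecPred_take_eq {α : Type} [Primcodable α] {f : α → Str} {g : α → ℕ} (hf : Primrec f)
    (hg : Primrec g) : PrimrecPred fun a => (f a).take (candStr (g a)).length = candStr (g a) :=
  PrimrecRel.comp Primrec.eq (Primrec.list_take.comp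
    (Primrec.list_length.comp (primrec_candStr.comp hg)) hf) (primrec_candStr.comp hg)

theorem primrecPred_small (hr : PrimrecPred r) : PrimrecPred (Small r) := by
  have hQ : PrimrecPred (LiveBelow r) := by
    refine PrimrecPred.bex_lt (p := fun w : (((ℕ × ℕ) × ℕ) × Str) × ℕ =>
      Live r (w.1.1.1, w.2) ∧ w.1.2.take (candStr w.2).length = candStr w.2)
      (PrimrecPred.and (PrimrecPred.subst (primrecPred_live hr) (Primrec.pair ?_ Primrec.snd))
        (primrecPred_take_eq ?_ Primrec.snd)) (Primrec.succ.comp (Primrec.snd.comp Primrec.fst))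
    · exact Primrec.fst.comp (Primrec.fst.comp Primrec.fst)
    · exact Primrec.snd.comp Primrec.fst
  have h2 := Primrec.nat_pow_const 2
  have hn : Primrec fun z : (ℕ × ℕ) × ℕ => z.1.2 := Primrec.snd.comp Primrec.fst
  exact Primrec.nat_le.comp (Primrec.nat_mul.comp (Primrec.list_length.comp
    ((primrec_filter_allStr hQ).comp hn Primrec.id))
      (h2.comp (Primrec.fst.comp Primrec.fst))) (h2.comp hn)

theorem primrecPred_approx (hr : PrimrecPred r) : PrimrecPred (Approx r) := by
  have hz : Primrec fun w : ((ℕ × ℕ) × Str) × ℕ => (w.1.1, w.2) :=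
    Primrec.pair (Primrec.fst.comp Primrec.fst) Primrec.snd
  exact PrimrecPred.bex_lt (p := fun w : ((ℕ × ℕ) × Str) × ℕ => Live r (w.1.1, w.2) ∧
    w.1.2.take (candStr w.2).length = candStr w.2 ∧ Small r (w.1.1, w.2))
    (PrimrecPred.and (PrimrecPred.subst (primrecPred_live hr) hz)
      (PrimrecPred.and (primrecPred_take_eq (Primrec.snd.comp Primrec.fst) Primrec.snd)
        (PrimrecPred.subst (primrecPred_small hr) hz))) (Primrec.snd.comp Primrec.fst)

theorem card_approx_le (i n : ℕ) :
    ((allStr n).filter (fun x => Approx r ((i, n), x))).length * 2 ^ i ≤ 2 ^ n := by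
  by_cases h : ∃ e, e < n ∧ Small r ((i, n), e)
  · obtain ⟨e₀, h₀⟩ := h
    have hs := Nat.findGreatest_spec (P := fun e => e < n ∧ Small r ((i, n), e)) h₀.1.le h₀
    refine le_trans ?_ hs.2
    gcongr ?_ * _
    refine length_le_of_nodup_subset ((nodup_allStr n).filter _) fun x hx => ?_
    simp only [List.mem_filter, decide_eq_true_eq] at hx ⊢
    obtain ⟨hx, e, he, hL, ht, hS⟩ := hx
    refine ⟨hx, e, Nat.lt_succ_of_le ?_, hL, ht⟩
    exact Nat.le_findGreatest (P := fun e => e < n ∧ Small r ((i, n), e)) he.le ⟨he, hS⟩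
  · have h1 : (allStr n).filter (fun x => Approx r ((i, n), x)) = [] := by
      refine List.filter_eq_nil_iff.2 fun x _ hx => h ?_
      obtain ⟨e, he, -, -, hS⟩ := of_decide_eq_true hx
      exact ⟨e, he, hS⟩
    simp [h1]

theorem eventually_approx {μ : MeasureTheory.Measure Seq} (hμ : FairCoin μ) {i : ℕ} {V : Set Seq}
    (hV : ∀ X, X ∈ V ↔ ∃ σ x, (∀ y, ¬ r (((i, σ), x), y)) ∧ X ∈ cyl σ)
    (hVμ : μ V ≤ 2⁻¹ ^ i) {A : Seq} (hA : A ∈ V) :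
    ∃ m, ∀ n, m ≤ n → Approx r ((i, n), pre A n) := by
  have := hμ.isProbabilityMeasure
  obtain ⟨σ, x, hx, hAσ⟩ := (hV A).1 hA
  let e₀ := Nat.pair (Encodable.encode σ) x
  have hσ : candStr e₀ = σ := by simp [candStr, e₀]
  have hx₀ : e₀.unpair.2 = x := by simp [e₀]
  have hbad : ∀ e, ∃ y, (∃ y', r (((i, candStr e), e.unpair.2), y')) →
      r (((i, candStr e), e.unpair.2), y) := by
    intro e
    by_cases h : ∃ y', r (((i, candStr e), e.unpair.2), y')
    · exact ⟨h.choose, fun _ => h.choose_spec⟩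
    · exact ⟨0, fun h' => (h h').elim⟩
  choose Y hY using hbad
  refine ⟨e₀ + 1 + σ.length + ((Finset.range (e₀ + 1)).sup Y + 1), fun n hn => ?_⟩
  refine ⟨e₀, by dsimp only; omega, ⟨by dsimp only; rw [hσ]; omega, fun y _ => ?_⟩, ?_, ?_⟩
  · dsimp only
    rw [hσ, hx₀]
    exact hx y
  · dsimp only
    rw [hσ, take_pre A (by omega)]
    exact hAσ
  · have hsub : {X | LiveBelow r (((i, n), e₀), pre X n)} ⊆ V := by
      rintro X ⟨e, he, ⟨hel, hL⟩, ht⟩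
      dsimp only at he hel hL ht
      refine (hV X).2 ⟨candStr e, e.unpair.2, fun y hy => ?_, ?_⟩
      · refine hL (Y e) ?_ (hY e ⟨y, hy⟩)
        have := Finset.le_sup (f := Y) (Finset.mem_range.2 he)
        omega
      · rwa [take_pre X hel] at ht
    have h1 : μ.real {X | LiveBelow r (((i, n), e₀), pre X n)} ≤ (1 / 2) ^ i := by
      have := ENNReal.toReal_mono (by simp) ((MeasureTheory.measure_mono hsub).trans hVμ)
      simpa [MeasureTheory.measureReal_def] using this
    rw [hμ.real_pre (fun x => LiveBelow r (((i, n), e₀), x)), div_le_iff₀ (by positivity), one_div,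
      inv_pow, inv_mul_eq_div, le_div_iff₀ (by positivity)] at h1
    exact_mod_cast h1

theorem mlRandomIn_of_exists_incompressible {μ : MeasureTheory.Measure Seq} (hμ : FairCoin μ)
    {U : Str →. Str} (hU : UniversalMachine U) {A : Seq}
    (hA : ∃ c : ℕ, ∀ m : ℕ, ∃ n : ℕ, m ≤ n ∧ (n : ℕ∞) ≤ Cplx U (pre A n) + c) :
    MLRandomIn (oracleOfSet haltingSet) μ A := by
  obtain ⟨c, hc⟩ := hA
  rintro V ⟨W, hW, hV, hVμ⟩ hAV
  obtain ⟨q, hq, hWq⟩ := hW.sig2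
  obtain ⟨r, hr, hqr⟩ := hq
  have hqr' : ∀ z, q z ↔ ∀ y, ¬ r (z, y) := fun z => by
    rw [← not_exists, ← hqr, not_not]
  obtain ⟨i, hi⟩ := hU.exists_compressible (primrecPred_approx hr) card_approx_le c
  obtain ⟨m, hm⟩ := eventually_approx hμ (r := r) (V := V i) (fun X => by
    simp only [hV i, Set.mem_iUnion, Set.mem_ofPred_eq, exists_prop, hWq, hqr', exists_and_right])
    (hVμ i) (Set.mem_iInter.1 hAV i)
  obtain ⟨n, hn, hinc⟩ := hc (max i m)
  have := hi (pre A n) (by simpa using (le_max_left _ _).trans hn)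
    (by simpa using hm n ((le_max_right _ _).trans hn))
  rw [length_pre] at this
  exact this.not_ge hinc

end

/-- **Plain-complexity characterization of 2-randomness** (Nies–Stephan–Terwijn;
Miller): `A` is 2-random (Martin-Löf random relative to `∅'`) if and only if there is
a `c` such that `C(A↾n) ≥ n - c` (stated as `n ≤ C(A↾n) + c`) for infinitely many `n`. -/
theorem two_random_iff_io_incompressible (μ : MeasureTheory.Measure Seq)
    (hμ : FairCoin μ) (U : Str →. Str) (hU : UniversalMachine U) (A : Seq) :
    MLRandomIn (oracleOfSet haltingSet) μ A ↔
      ∃ c : ℕ, ∀ m : ℕ, ∃ n : ℕ, m ≤ n ∧ (n : ℕ∞) ≤ Cplx U (pre A n) + c := by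
  exact ⟨exists_incompressible_of_mlRandomIn hμ hU.1, mlRandomIn_of_exists_incompressible hμ hU⟩

end AR
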